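/- Let t₀ > 0 and let f be a holomorphic function on the polydisc {ψ < −t₀} with Taylor expansion f(w) = Σ_{α ∈ (ℤ_{≥0})ⁿ} b_α w^α. Set q_α := Σ_{j=1}^n (α_j+1)/p_j − 1 and E₁ := {α ∈ (ℤ_{≥0})ⁿ : q_α = 0}. Then for every t > t₀, as an equality in [0,+∞], ∫_{{−t−1 < ψ < −t}} |f|² e^{−ψ} dλ_n = Σ_{α ∈ E₁} |b_α|² πⁿ / Π_{j=1}^n (α_j+1) + Σ_{α ∉ E₁} |b_α|² πⁿ (q_α+1)(e^{−q_α t} − e^{−q_α (t+1)}) / (q_α · Π_{j=1}^n (α_j+1)). -/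

import Mathlib

open MeasureTheory Filter

/-- `psi p w = max_j 2 p_j log |w_j|`. -/
noncomputable def psi {n : ℕ} (p : Fin n → ℝ) (w : Fin n → ℂ) : ℝ :=
  ⨆ j, 2 * p j * Real.log ‖w j‖

/-- The polydisc `{ψ < s} = Π_j {|w_j| < e^{s/(2 p_j)}}`. -/
noncomputable def polydisc {n : ℕ} (p : Fin n → ℝ) (s : ℝ) : Set (Fin n → ℂ) :=
  {w | ∀ j, ‖w j‖ < Real.exp (s / (2 * p j))}

/-- `qExp p α = Σ_j (α_j + 1) / p_j`. -/
noncomputable def qExp {n : ℕ} (p : Fin n → ℝ) (α : Fin n → ℕ) : ℝ :=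
  ∑ j, ((α j : ℝ) + 1) / p j

/-!
A rotation-invariant weight kills the cross terms `w ^ α * conj (w ^ β)`, by Parseval on the torus
applied to the rotations of a single point, so integrating `|f|²` reduces to integrating the
`|w ^ α|²`. For those, scaling shows that `{ψ < s}` has mass proportional to `exp (q s)` with
`q = qExp p α`; hence `ψ` pushes `|w ^ α|² dλ` forward to a multiple of `q exp (q x) dx`, and the
weighted integral over a shell becomes an elementary integral on the line.
-/

open scoped ENNReal

section Orthonormal

lemma hasSum_norm_sq_of_orthonormal {𝕜 E κ : Type*} [RCLike 𝕜] [NormedAddCommGroup E]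
    [InnerProductSpace 𝕜 E] {v : κ → E} (hv : Orthonormal 𝕜 v) {c : κ → 𝕜} {x : E}
    (hx : HasSum (fun i ↦ c i • v i) x) : HasSum (fun i ↦ ‖c i‖ ^ 2) (‖x‖ ^ 2) := by
  have norm_sq_partial_sum (s : Finset κ) : ‖∑ i ∈ s, c i • v i‖ ^ 2 = ∑ i ∈ s, ‖c i‖ ^ 2 := by
    rw [← RCLike.ofReal_inj (K := 𝕜), RCLike.ofReal_pow, ← inner_self_eq_norm_sq_to_K,
      hv.inner_sum]
    simp [RCLike.conj_mul]
  exact ((hx.norm).pow 2).congr norm_sq_partial_sum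

lemma lintegral_norm_sq_of_orthonormal {X κ : Type*} [TopologicalSpace X] [CompactSpace X]
    [MeasurableSpace X] [BorelSpace X] {μ : Measure X} [IsFiniteMeasure μ]
    {e : κ → C(X, ℂ)} (he : Orthonormal ℂ fun i ↦ ContinuousMap.toLp (E := ℂ) 2 μ ℂ (e i))
    {c : κ → ℂ} {F : C(X, ℂ)} (hF : HasSum (fun i ↦ c i • e i) F) :
    ∫⁻ x, ENNReal.ofReal (‖F x‖ ^ 2) ∂μ = ∑' i, ENNReal.ofReal (‖c i‖ ^ 2) := by
  let T := ContinuousMap.toLp (E := ℂ) 2 μ ℂ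
  have norm_sq_toLp : ‖T F‖ ^ 2 = ∫ x, ‖F x‖ ^ 2 ∂μ := by
    rw [← Complex.ofReal_inj, Complex.ofReal_pow]
    refine (inner_self_eq_norm_sq_to_K (𝕜 := ℂ) (T F)).symm.trans ?_
    rw [ContinuousMap.inner_toLp, ← integral_complex_ofReal]
    simp [Complex.mul_conj, Complex.normSq_eq_norm_sq]
  have parseval : HasSum (fun i ↦ ‖c i‖ ^ 2) (∫ x, ‖F x‖ ^ 2 ∂μ) := by
    rw [← norm_sq_toLp]
    exact hasSum_norm_sq_of_orthonormal he (by simpa using hF.mapL T)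
  have integrable_norm_sq : Integrable (fun x ↦ ‖F x‖ ^ 2) μ :=
    Continuous.integrable_of_hasCompactSupport (by fun_prop) (.of_compactSpace _)
  rw [← ofReal_integral_eq_lintegral_ofReal integrable_norm_sq (.of_forall fun _ ↦ by positivity),
    ← parseval.tsum_eq, ENNReal.ofReal_tsum_of_nonneg (fun _ ↦ by positivity) parseval.summable]

end Orthonormal

section Torus

variable {ι : Type*}

/-- The rotation of `w` in each coordinate by the corresponding angle of the torus point `θ`,
where `θ j` in `ℝ / ℤ` acts as multiplication by `exp (2πi θ j)`. -/
noncomputable def torusRotate (θ : UnitAddTorus ι) (w : ι → ℂ) : ι → ℂ :=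
  fun j ↦ (θ j).toCircle * w j

@[simp]
lemma norm_torusRotate_apply (θ : UnitAddTorus ι) (w : ι → ℂ) (j : ι) :
    ‖torusRotate θ w j‖ = ‖w j‖ := by
  rw [torusRotate, norm_mul, Circle.norm_coe, one_mul]

lemma continuous_torusRotate :
    Continuous fun x : (ι → ℂ) × UnitAddTorus ι ↦ torusRotate x.2 x.1 := by
  unfold torusRotate
  fun_prop

variable [Fintype ι]

lemma prod_torusRotate_pow (θ : UnitAddTorus ι) (w : ι → ℂ) (α : ι → ℕ) :
    ∏ j, torusRotate θ w j ^ α j =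
      (∏ j, w j ^ α j) * UnitAddTorus.mFourier (fun j ↦ (α j : ℤ)) θ := by
  simp [torusRotate, UnitAddTorus.mFourier, fourier_apply, AddCircle.toCircle_nsmul, mul_pow,
    Finset.prod_mul_distrib, mul_comm]

lemma measurePreserving_torusRotate (θ : UnitAddTorus ι) :
    MeasurePreserving (torusRotate θ) :=
  volume_preserving_pi fun j ↦ (rotation (θ j).toCircle).measurePreserving

/-- The Haar probability measure on the torus `(ℝ / ℤ)^ι`, for which the characters are
orthonormal. -/
noncomputable abbrev torusHaar (ι : Type*) [Fintype ι] : Measure (UnitAddTorus ι) :=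
  Measure.pi fun _ ↦ AddCircle.haarAddCircle

lemma lintegral_lintegral_torusRotate {H : (ι → ℂ) → ℝ≥0∞} (hH : Measurable H) :
    ∫⁻ w, ∫⁻ θ, H (torusRotate θ w) ∂torusHaar ι = ∫⁻ w, H w := by
  have measurable_joint :
      Measurable (Function.uncurry fun (w : ι → ℂ) θ ↦ H (torusRotate θ w)) :=
    hH.comp continuous_torusRotate.measurable
  rw [lintegral_lintegral_swap measurable_joint.aemeasurable]
  simp [(measurePreserving_torusRotate _).lintegral_comp hH]

lemma orthonormal_toLp_mFourier_natCast :
    Orthonormal ℂ fun α : ι → ℕ ↦ ContinuousMap.toLp (E := ℂ) 2 (torusHaar ι) ℂ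
      (UnitAddTorus.mFourier fun j ↦ (α j : ℤ)) :=
  UnitAddTorus.orthonormal_mFourier.comp (fun (α : ι → ℕ) j ↦ (α j : ℤ))
    fun _ _ h ↦ funext fun j ↦ Nat.cast_injective (congrFun h j)

lemma lintegral_norm_sq_torusRotate {f : (ι → ℂ) → ℂ} {b : (ι → ℕ) → ℂ} {w : ι → ℂ}
    (hf : ∀ θ, HasSum (fun α : ι → ℕ ↦ b α * ∏ j, torusRotate θ w j ^ α j)
      (f (torusRotate θ w))) :
    ∫⁻ θ, ENNReal.ofReal (‖f (torusRotate θ w)‖ ^ 2) ∂torusHaar ι =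
      ∑' α, ENNReal.ofReal (‖b α‖ ^ 2) * ENNReal.ofReal (∏ j, ‖w j‖ ^ (2 * α j)) := by
  let c (α : ι → ℕ) : ℂ := b α * ∏ j, w j ^ α j
  let e (α : ι → ℕ) : C(UnitAddTorus ι, ℂ) := UnitAddTorus.mFourier fun j ↦ (α j : ℤ)
  have hf' (θ) : HasSum (fun α ↦ c α * e α θ) (f (torusRotate θ w)) := by
    simpa only [c, e, prod_torusRotate_pow, mul_assoc] using hf θ
  have summable_norm : Summable fun α ↦ ‖c α • e α‖ := by
    have norm_at_zero (α) : ‖c α * e α 0‖ = ‖c α • e α‖ := by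
      rw [norm_smul, UnitAddTorus.mFourier_norm]
      simp [e, UnitAddTorus.mFourier]
    simpa only [norm_at_zero] using (hf' 0).summable.norm
  obtain ⟨F, hF⟩ := summable_norm.of_norm
  have hFf (θ) : F θ = f (torusRotate θ w) := (ContinuousMap.hasSum_apply hF θ).unique (hf' θ)
  simp_rw [← hFf, lintegral_norm_sq_of_orthonormal orthonormal_toLp_mFourier_natCast hF,
    ← ENNReal.ofReal_mul (sq_nonneg _), c, norm_mul, norm_prod, norm_pow, mul_pow,
    ← Finset.prod_pow, ← pow_mul, mul_comm]

end Torus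

section InvariantWeight

lemma measurable_of_hasSum {κ X E : Type*} [Countable κ] [MeasurableSpace X]
    [NormedAddCommGroup E] [MeasurableSpace E] [BorelSpace E] [SecondCountableTopology E]
    {F : κ → X → E} {f : X → E} (hF : ∀ i, Measurable (F i))
    (hf : ∀ x, HasSum (fun i ↦ F i x) (f x)) : Measurable f :=
  measurable_of_tendsto_metrizable' atTop (fun s ↦ s.measurable_fun_sum fun i _ ↦ hF i)
    (tendsto_pi_nhds.2 hf)

variable {ι : Type*} [Fintype ι] {f : (ι → ℂ) → ℂ} {b : (ι → ℕ) → ℂ} {W : (ι → ℂ) → ℝ≥0∞}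

lemma measurable_indicator_of_hasSum_monomial {D : Set (ι → ℂ)} (hD : MeasurableSet D)
    (hf : ∀ w ∈ D, HasSum (fun α : ι → ℕ ↦ b α * ∏ j, w j ^ α j) (f w)) :
    Measurable (D.indicator f) := by
  refine measurable_of_hasSum (F := fun α ↦ D.indicator fun w ↦ b α * ∏ j, w j ^ α j)
    (fun α ↦ (by fun_prop : Measurable fun w : ι → ℂ ↦ b α * ∏ j, w j ^ α j).indicator hD)
    fun w ↦ ?_
  by_cases hw : w ∈ D
  · simpa [hw] using hf w hw
  · simp [hw]

lemma lintegral_norm_sq_mul_of_measurable (hfm : Measurable f) (hW : Measurable W)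
    (hrot : ∀ θ w, W (torusRotate θ w) = W w)
    (hf : ∀ w, W w ≠ 0 → HasSum (fun α : ι → ℕ ↦ b α * ∏ j, w j ^ α j) (f w)) :
    ∫⁻ w, ENNReal.ofReal (‖f w‖ ^ 2) * W w =
      ∑' α, ENNReal.ofReal (‖b α‖ ^ 2) *
        ∫⁻ w, ENNReal.ofReal (∏ j, ‖w j‖ ^ (2 * α j)) * W w := by
  have average (w : ι → ℂ) :
      ∫⁻ θ, ENNReal.ofReal (‖f (torusRotate θ w)‖ ^ 2) * W (torusRotate θ w) ∂torusHaar ι =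
        ∑' α, ENNReal.ofReal (‖b α‖ ^ 2) *
          (ENNReal.ofReal (∏ j, ‖w j‖ ^ (2 * α j)) * W w) := by
    have measurable_rotate : Measurable fun θ : UnitAddTorus ι ↦ f (torusRotate θ w) :=
      hfm.comp (continuous_torusRotate.comp (Continuous.prodMk_right w)).measurable
    simp_rw [hrot]
    rw [lintegral_mul_const _ (measurable_rotate.norm.pow_const 2).ennreal_ofReal]
    rcases eq_or_ne (W w) 0 with hw | hw
    · simp [hw]
    · rw [lintegral_norm_sq_torusRotate fun θ ↦ hf _ (by rwa [hrot]), ← ENNReal.tsum_mul_right]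
      simp only [mul_assoc]
  rw [← lintegral_lintegral_torusRotate (by fun_prop)]
  simp_rw [average]
  rw [lintegral_tsum fun α ↦ by fun_prop]
  exact tsum_congr fun α ↦ lintegral_const_mul _ (by fun_prop)

theorem lintegral_norm_sq_mul (hW : Measurable W) (hrot : ∀ θ w, W (torusRotate θ w) = W w)
    (hf : ∀ w, W w ≠ 0 → HasSum (fun α : ι → ℕ ↦ b α * ∏ j, w j ^ α j) (f w)) :
    ∫⁻ w, ENNReal.ofReal (‖f w‖ ^ 2) * W w =
      ∑' α, ENNReal.ofReal (‖b α‖ ^ 2) *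
        ∫⁻ w, ENNReal.ofReal (∏ j, ‖w j‖ ^ (2 * α j)) * W w := by
  let D : Set (ι → ℂ) := {w | W w ≠ 0}
  have hD : MeasurableSet D := hW (measurableSet_singleton 0).compl
  have indicator_eq (w) (hw : W w ≠ 0) : D.indicator f w = f w := Set.indicator_of_mem hw f
  rw [← lintegral_norm_sq_mul_of_measurable (measurable_indicator_of_hasSum_monomial hD hf) hW
    hrot fun w hw ↦ (indicator_eq w hw).symm ▸ hf w hw]
  refine lintegral_congr fun w ↦ ?_
  rcases eq_or_ne (W w) 0 with hw | hw
  · simp [hw]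
  · rw [indicator_eq w hw]

end InvariantWeight

section Polydisc

variable {n : ℕ} {p : Fin n → ℝ} {s : ℝ}

lemma polydisc_mono (hp : ∀ j, 0 < p j) : Monotone (polydisc p) := by
  intro s s' hss' w hw j
  have := hp j
  exact (hw j).trans_le (by gcongr)

lemma polydisc_eq_pi_ball (p : Fin n → ℝ) (s : ℝ) :
    polydisc p s = Set.univ.pi fun j ↦ Metric.ball 0 (Real.exp (s / (2 * p j))) := by
  ext w
  simp [polydisc]

lemma measurableSet_polydisc (p : Fin n → ℝ) (s : ℝ) : MeasurableSet (polydisc p s) := by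
  rw [polydisc_eq_pi_ball]
  exact .univ_pi fun _ ↦ measurableSet_ball

lemma torusRotate_mem_polydisc_iff {θ : UnitAddTorus (Fin n)} {w : Fin n → ℂ} :
    torusRotate θ w ∈ polydisc p s ↔ w ∈ polydisc p s := by
  simp [polydisc]

lemma psi_torusRotate (θ : UnitAddTorus (Fin n)) (w : Fin n → ℂ) :
    psi p (torusRotate θ w) = psi p w := by
  simp [psi]

lemma measurable_psi (p : Fin n → ℝ) : Measurable (psi p) :=
  Measurable.iSup fun j ↦ by fun_prop

lemma psi_lt_iff (hn : 0 < n) {w : Fin n → ℂ} :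
    psi p w < s ↔ ∀ j, 2 * p j * Real.log ‖w j‖ < s := by
  have : Nonempty (Fin n) := ⟨⟨0, hn⟩⟩
  simpa [psi, iSup] using
    (Set.finite_range fun j ↦ 2 * p j * Real.log ‖w j‖).csSup_lt_iff (Set.range_nonempty _)

/-
The two sets may differ where a coordinate vanishes, since `Real.log 0 = 0` instead of `-∞`.
-/
lemma setOf_psi_lt_ae_eq_polydisc (hn : 0 < n) (hp : ∀ j, 0 < p j) (s : ℝ) :
    {w | psi p w < s} =ᵐ[volume] polydisc p s := by
  have ae_ne_zero : ∀ᵐ w : Fin n → ℂ, ∀ j, w j ≠ 0 :=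
    ae_all_iff.2 fun j ↦ Measure.ae_eval_ne _ j 0
  filter_upwards [ae_ne_zero] with w hw
  refine propext ((psi_lt_iff hn).trans (forall_congr' fun j ↦ ?_))
  rw [← Real.log_lt_iff_lt_exp (norm_pos_iff.2 (hw j)), lt_div_iff₀' (by linarith [hp j])]

end Polydisc

section Monomial

lemma integral_ball_norm_pow (k : ℕ) {r : ℝ} (hr : 0 ≤ r) :
    ∫ z in Metric.ball (0 : ℂ) r, ‖z‖ ^ k = 2 * Real.pi * r ^ (k + 2) / (k + 2) := by
  have radial : (Metric.ball (0 : ℂ) r).indicator (fun z ↦ ‖z‖ ^ k) =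
      fun z ↦ (Set.Iio r).indicator (· ^ k) ‖z‖ := by
    ext z
    simp [Set.indicator]
  have jacobian (y : ℝ) : y ^ (Module.finrank ℝ ℂ - 1) • (Set.Iio r).indicator (· ^ k) y =
      (Set.Iio r).indicator (· ^ (k + 1)) y := by
    by_cases hy : y < r <;> simp [Complex.finrank_real_complex, hy, pow_succ']
  rw [← integral_indicator measurableSet_ball, radial, integral_fun_norm_addHaar]
  simp only [jacobian]
  rw [setIntegral_indicator measurableSet_Iio, Set.Ioi_inter_Iio, ← integral_Ioc_eq_integral_Ioo,
    ← intervalIntegral.integral_of_le hr, integral_pow]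
  simp [Measure.real, Complex.volume_ball]
  field_simp
  ring

lemma lintegral_pi_ball_prod_norm_pow {ι : Type*} [Fintype ι] (k : ι → ℕ) {r : ι → ℝ}
    (hr : ∀ j, 0 ≤ r j) :
    ∫⁻ w in Set.univ.pi fun j ↦ Metric.ball (0 : ℂ) (r j), ENNReal.ofReal (∏ j, ‖w j‖ ^ k j) =
      ENNReal.ofReal (∏ j, (2 * Real.pi * r j ^ (k j + 2) / (k j + 2))) := by
  have integrableOn (j : ι) : IntegrableOn (fun z : ℂ ↦ ‖z‖ ^ k j) (Metric.ball 0 (r j)) :=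
    (ContinuousOn.integrableOn_compact (isCompact_closedBall _ _) (by fun_prop)).mono_set
      Metric.ball_subset_closedBall
  rw [volume_pi, Measure.restrict_pi_pi, ← ofReal_integral_eq_lintegral_ofReal
    (.fintype_prod (𝕜 := ℝ) integrableOn)
    (.of_forall fun _ ↦ Finset.prod_nonneg fun _ _ ↦ by positivity),
    integral_fintype_prod_eq_prod (𝕜 := ℝ) (f := fun j (z : ℂ) ↦ ‖z‖ ^ k j)]
  simp only [integral_ball_norm_pow _ (hr _)]

/-- `∫ |w ^ α|²` over the unit polydisc. -/
noncomputable def monomialNormSq {n : ℕ} (α : Fin n → ℕ) : ℝ :=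
  Real.pi ^ n / ∏ j, ((α j : ℝ) + 1)

variable {n : ℕ} {p : Fin n → ℝ}

lemma monomialNormSq_nonneg (α : Fin n → ℕ) : 0 ≤ monomialNormSq α := by
  unfold monomialNormSq
  positivity

lemma qExp_pos (hn : 0 < n) (hp : ∀ j, 0 < p j) (α : Fin n → ℕ) : 0 < qExp p α := by
  have : Nonempty (Fin n) := ⟨⟨0, hn⟩⟩
  exact Finset.sum_pos (fun j _ ↦ div_pos (by positivity) (hp j)) Finset.univ_nonempty

lemma lintegral_polydisc_monomial (hp : ∀ j, 0 < p j) (α : Fin n → ℕ) (s : ℝ) :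
    ∫⁻ w in polydisc p s, ENNReal.ofReal (∏ j, ‖w j‖ ^ (2 * α j)) =
      ENNReal.ofReal (monomialNormSq α * Real.exp (qExp p α * s)) := by
  have factor (j : Fin n) :
      2 * Real.pi * Real.exp (s / (2 * p j)) ^ (2 * α j + 2) / ((2 * α j : ℕ) + 2) =
        Real.pi / ((α j : ℝ) + 1) * Real.exp (((α j : ℝ) + 1) / p j * s) := by
    have := (hp j).ne'
    have exponent : ((2 * α j + 2 : ℕ) : ℝ) * (s / (2 * p j)) = ((α j : ℝ) + 1) / p j * s := by
      push_cast
      field_simp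
    rw [← Real.exp_nat_mul, exponent]
    push_cast
    field_simp
  rw [polydisc_eq_pi_ball, lintegral_pi_ball_prod_norm_pow _ fun j ↦ (Real.exp_pos _).le]
  simp only [factor, Finset.prod_mul_distrib, ← Real.exp_sum, ← Finset.sum_mul]
  simp [monomialNormSq, qExp, Finset.prod_div_distrib]

end Monomial

section Pushforward

lemma ext_of_Iio {μ ν : Measure ℝ} (hμ : ∀ a, μ (Set.Iio a) ≠ ∞)
    (h : ∀ a, μ (Set.Iio a) = ν (Set.Iio a)) : μ = ν := by
  refine Measure.ext_of_generateFrom_of_iUnion (Set.range Set.Iio) (fun k : ℕ ↦ Set.Iio (k : ℝ))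
    (BorelSpace.measurable_eq.trans (borel_eq_generateFrom_Iio ℝ)) isPiSystem_Iio ?_
    (fun k ↦ ⟨k, rfl⟩) (fun k ↦ hμ k) ?_
  · exact Set.iUnion_eq_univ_iff.2 exists_nat_gt
  · rintro _ ⟨a, rfl⟩
    exact h a

lemma lintegral_Iio_mul_exp_mul {q : ℝ} (hq : 0 < q) (a : ℝ) :
    ∫⁻ x in Set.Iio a, ENNReal.ofReal (q * Real.exp (q * x)) =
      ENNReal.ofReal (Real.exp (q * a)) := by
  rw [setLIntegral_congr Iio_ae_eq_Iic, ← ofReal_integral_eq_lintegral_ofReal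
    ((integrableOn_exp_mul_Iic hq a).const_mul q) (.of_forall fun x ↦ by positivity),
    integral_const_mul, integral_exp_mul_Iic hq, mul_div_cancel₀ _ hq.ne']

variable {n : ℕ} {p : Fin n → ℝ}

lemma map_psi_withDensity_monomial (hn : 0 < n) (hp : ∀ j, 0 < p j) (α : Fin n → ℕ) :
    (volume.withDensity fun w ↦ ENNReal.ofReal (∏ j, ‖w j‖ ^ (2 * α j))).map (psi p) =
      ENNReal.ofReal (monomialNormSq α) •
        volume.withDensity fun x ↦ ENNReal.ofReal (qExp p α * Real.exp (qExp p α * x)) := by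
  have map_apply_Iio (a : ℝ) :
      (volume.withDensity fun w ↦ ENNReal.ofReal (∏ j, ‖w j‖ ^ (2 * α j))).map (psi p)
        (Set.Iio a) = ENNReal.ofReal (monomialNormSq α * Real.exp (qExp p α * a)) := by
    rw [Measure.map_apply (measurable_psi p) measurableSet_Iio,
      withDensity_apply _ (measurable_psi p measurableSet_Iio),
      ← lintegral_polydisc_monomial hp]
    exact setLIntegral_congr (setOf_psi_lt_ae_eq_polydisc hn hp a)
  refine ext_of_Iio (fun a ↦ map_apply_Iio a ▸ ENNReal.ofReal_ne_top) fun a ↦ ?_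
  rw [map_apply_Iio, Measure.smul_apply, withDensity_apply _ measurableSet_Iio,
    lintegral_Iio_mul_exp_mul (qExp_pos hn hp α), smul_eq_mul,
    ENNReal.ofReal_mul (monomialNormSq_nonneg α)]

lemma lintegral_monomial_mul_comp_psi (hn : 0 < n) (hp : ∀ j, 0 < p j) (α : Fin n → ℕ)
    {g : ℝ → ℝ≥0∞} (hg : Measurable g) :
    ∫⁻ w, ENNReal.ofReal (∏ j, ‖w j‖ ^ (2 * α j)) * g (psi p w) =
      ENNReal.ofReal (monomialNormSq α) *
        ∫⁻ x, ENNReal.ofReal (qExp p α * Real.exp (qExp p α * x)) * g x := by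
  have hpsi := measurable_psi p
  have key := congrArg (fun μ ↦ ∫⁻ x, g x ∂μ) (map_psi_withDensity_monomial hn hp α)
  rwa [lintegral_map hg hpsi, lintegral_smul_measure, smul_eq_mul,
    lintegral_withDensity_eq_lintegral_mul _ (by fun_prop) (by fun_prop),
    lintegral_withDensity_eq_lintegral_mul _ (by fun_prop) hg] at key

theorem lintegral_norm_sq_mul_comp_psi (hn : 0 < n) (hp : ∀ j, 0 < p j) {s : ℝ}
    {f : (Fin n → ℂ) → ℂ} {b : (Fin n → ℕ) → ℂ}
    (hf : ∀ w ∈ polydisc p s, HasSum (fun α : Fin n → ℕ ↦ b α * ∏ j, w j ^ α j) (f w))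
    {g : ℝ → ℝ≥0∞} (hg : Measurable g) (hgs : ∀ x, s ≤ x → g x = 0) :
    ∫⁻ w, ENNReal.ofReal (‖f w‖ ^ 2) * g (psi p w) =
      ∑' α, ENNReal.ofReal (‖b α‖ ^ 2) * (ENNReal.ofReal (monomialNormSq α) *
        ∫⁻ x, ENNReal.ofReal (qExp p α * Real.exp (qExp p α * x)) * g x) := by
  let W : (Fin n → ℂ) → ℝ≥0∞ := (polydisc p s).indicator (g ∘ psi p)
  have hW : Measurable W :=
    (hg.comp (measurable_psi p)).indicator (measurableSet_polydisc p s)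
  have hW_rot (θ w) : W (torusRotate θ w) = W w := by
    by_cases hw : w ∈ polydisc p s <;>
      simp [W, hw, torusRotate_mem_polydisc_iff, psi_torusRotate]
  have hW_ae : ∀ᵐ w, W w = g (psi p w) := by
    filter_upwards [(setOf_psi_lt_ae_eq_polydisc hn hp s).mem_iff] with w hw
    by_cases hws : w ∈ polydisc p s
    · simp [W, hws]
    · simp [W, hws, hgs _ (not_lt.1 (hw.not.2 hws))]
  have lintegral_mul_W (F : (Fin n → ℂ) → ℝ≥0∞) :
      ∫⁻ w, F w * W w = ∫⁻ w, F w * g (psi p w) :=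
    lintegral_congr_ae (hW_ae.mono fun w hw ↦ congrArg (F w * ·) hw)
  have key := lintegral_norm_sq_mul hW hW_rot
    fun w hw ↦ hf w (Set.mem_of_indicator_ne_zero hw)
  simpa only [lintegral_mul_W, lintegral_monomial_mul_comp_psi hn hp _ hg] using key

end Pushforward

section Shell

lemma lintegral_Ioo_mul_exp_mul_exp_neg {a b q : ℝ} (hab : a ≤ b) (hq : 0 ≤ q) :
    ∫⁻ x in Set.Ioo a b, ENNReal.ofReal (q * Real.exp (q * x)) * ENNReal.ofReal (Real.exp (-x)) =
      ENNReal.ofReal (q * ∫ x in a..b, Real.exp ((q - 1) * x)) := by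
  have combine (x : ℝ) : ENNReal.ofReal (q * Real.exp (q * x)) * ENNReal.ofReal (Real.exp (-x)) =
      ENNReal.ofReal (q * Real.exp ((q - 1) * x)) := by
    rw [← ENNReal.ofReal_mul (by positivity), mul_assoc, ← Real.exp_add]
    ring_nf
  have integrableOn : IntegrableOn (fun x ↦ q * Real.exp ((q - 1) * x)) (Set.Ioo a b) :=
    (Continuous.integrableOn_Icc (by fun_prop)).mono_set Set.Ioo_subset_Icc_self
  simp only [combine]
  rw [← ofReal_integral_eq_lintegral_ofReal integrableOn (.of_forall fun x ↦ by positivity),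
    integral_const_mul, intervalIntegral.integral_of_le hab, integral_Ioc_eq_integral_Ioo]

lemma intervalIntegral_exp_mul {c : ℝ} (hc : c ≠ 0) (a b : ℝ) :
    ∫ x in a..b, Real.exp (c * x) = (Real.exp (c * b) - Real.exp (c * a)) / c := by
  rw [intervalIntegral.integral_comp_mul_left _ hc, integral_exp, smul_eq_mul, inv_mul_eq_div]

variable {n : ℕ} {p : Fin n → ℝ}

theorem lintegral_psi_shell (hn : 0 < n) (hp : ∀ j, 0 < p j) {f : (Fin n → ℂ) → ℂ}
    {b : (Fin n → ℕ) → ℂ} {s₁ s₂ : ℝ} (hs : s₁ ≤ s₂)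
    (hf : ∀ w ∈ polydisc p s₂, HasSum (fun α : Fin n → ℕ ↦ b α * ∏ j, w j ^ α j) (f w)) :
    ∫⁻ w in {w | s₁ < psi p w ∧ psi p w < s₂},
        ENNReal.ofReal (‖f w‖ ^ 2 * Real.exp (-psi p w)) =
      ∑' α, ENNReal.ofReal (‖b α‖ ^ 2 * monomialNormSq α *
        (qExp p α * ∫ x in s₁..s₂, Real.exp ((qExp p α - 1) * x))) := by
  let g : ℝ → ℝ≥0∞ := (Set.Ioo s₁ s₂).indicator fun x ↦ ENNReal.ofReal (Real.exp (-x))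
  have hg : Measurable g := Measurable.indicator (by fun_prop) measurableSet_Ioo
  have hgs (x) (hx : s₂ ≤ x) : g x = 0 := Set.indicator_of_notMem (fun h ↦ hx.not_gt h.2) _
  have lhs : ∫⁻ w in psi p ⁻¹' Set.Ioo s₁ s₂,
      ENNReal.ofReal (‖f w‖ ^ 2 * Real.exp (-psi p w)) =
        ∫⁻ w, ENNReal.ofReal (‖f w‖ ^ 2) * g (psi p w) := by
    rw [← lintegral_indicator (measurable_psi p measurableSet_Ioo)]
    refine lintegral_congr fun w ↦ ?_
    by_cases hw : psi p w ∈ Set.Ioo s₁ s₂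
    · simp only [g, Set.indicator_of_mem hw, Set.indicator_of_mem (Set.mem_preimage.2 hw),
        ENNReal.ofReal_mul (sq_nonneg _)]
    · simp only [g, Set.indicator_of_notMem hw,
        Set.indicator_of_notMem (mt Set.mem_preimage.1 hw), mul_zero]
  have rhs (q : ℝ) (hq : 0 ≤ q) : ∫⁻ x, ENNReal.ofReal (q * Real.exp (q * x)) * g x =
      ENNReal.ofReal (q * ∫ x in s₁..s₂, Real.exp ((q - 1) * x)) := by
    simp only [g, ← lintegral_Ioo_mul_exp_mul_exp_neg hs hq,
      ← lintegral_indicator measurableSet_Ioo, Set.indicator_mul_right]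
  refine (lhs.trans (lintegral_norm_sq_mul_comp_psi hn hp hf hg hgs)).trans
    (tsum_congr fun α ↦ ?_)
  rw [rhs _ (qExp_pos hn hp α).le, ← ENNReal.ofReal_mul (monomialNormSq_nonneg α),
    ← ENNReal.ofReal_mul (sq_nonneg _), mul_assoc]

end Shell

theorem stmt_4_general (n : ℕ) (hn : 0 < n) (p : Fin n → ℝ) (hp : ∀ j, 0 < p j)
    (f : (Fin n → ℂ) → ℂ) (b : (Fin n → ℕ) → ℂ) (t : ℝ)
    (hTaylor : ∀ w ∈ polydisc p (-t),
      HasSum (fun α : Fin n → ℕ ↦ b α * ∏ j, (w j) ^ (α j)) (f w)) :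
    (∫⁻ w in {w : Fin n → ℂ | -t - 1 < psi p w ∧ psi p w < -t},
        ENNReal.ofReal (‖f w‖ ^ 2 * Real.exp (-psi p w))) =
      (∑' α : {α : Fin n → ℕ // qExp p α - 1 = 0},
        ENNReal.ofReal (‖b α.1‖ ^ 2 * Real.pi ^ n / ∏ j, ((α.1 j : ℝ) + 1))) +
      ∑' α : {α : Fin n → ℕ // qExp p α - 1 ≠ 0},
        ENNReal.ofReal (‖b α.1‖ ^ 2 * Real.pi ^ n * ((qExp p α.1 - 1) + 1) *
          (Real.exp (-((qExp p α.1 - 1) * t)) - Real.exp (-((qExp p α.1 - 1) * (t + 1)))) /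
          ((qExp p α.1 - 1) * ∏ j, ((α.1 j : ℝ) + 1))) := by
  rw [lintegral_psi_shell hn hp (by linarith) hTaylor,
    ← ENNReal.summable.tsum_add_tsum_compl (s := {α | qExp p α - 1 = 0}) ENNReal.summable]
  congr 1
  · refine tsum_congr fun ⟨α, (hα : qExp p α - 1 = 0)⟩ ↦ congrArg ENNReal.ofReal ?_
    simp [sub_eq_zero.1 hα, monomialNormSq, mul_div_assoc]
  · refine tsum_congr fun ⟨α, (hα : qExp p α - 1 ≠ 0)⟩ ↦ congrArg ENNReal.ofReal ?_
    have exponent : (qExp p α - 1) * (-t - 1) = -((qExp p α - 1) * (t + 1)) := by ring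
    rw [intervalIntegral_exp_mul hα, monomialNormSq, mul_neg, exponent]
    field_simp
    ring

theorem stmt_4 (n : ℕ) (hn : 0 < n) (p : Fin n → ℝ) (hp : ∀ j, 0 < p j)
    (t₀ : ℝ) (ht₀ : 0 < t₀) (f : (Fin n → ℂ) → ℂ) (b : (Fin n → ℕ) → ℂ)
    (hf : DifferentiableOn ℂ f (polydisc p (-t₀)))
    (hTaylor : ∀ w ∈ polydisc p (-t₀),
      HasSum (fun α : Fin n → ℕ => b α * ∏ j, (w j) ^ (α j)) (f w))
    (t : ℝ) (ht : t₀ < t) :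
    (∫⁻ w in {w : Fin n → ℂ | -t - 1 < psi p w ∧ psi p w < -t},
        ENNReal.ofReal (‖f w‖ ^ 2 * Real.exp (-psi p w))) =
      (∑' α : {α : Fin n → ℕ // qExp p α - 1 = 0},
        ENNReal.ofReal (‖b α.1‖ ^ 2 * Real.pi ^ n / ∏ j, ((α.1 j : ℝ) + 1))) +
      ∑' α : {α : Fin n → ℕ // qExp p α - 1 ≠ 0},
        ENNReal.ofReal (‖b α.1‖ ^ 2 * Real.pi ^ n * ((qExp p α.1 - 1) + 1) *
          (Real.exp (-((qExp p α.1 - 1) * t)) - Real.exp (-((qExp p α.1 - 1) * (t + 1)))) /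
          ((qExp p α.1 - 1) * ∏ j, ((α.1 j : ℝ) + 1))) :=
  stmt_4_general n hn p hp f b t fun w hw ↦
    hTaylor w (polydisc_mono hp (neg_le_neg ht.le) hw)
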